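/- Let (A,Λ) be an associative form ring with 1, n ≥ 3, and let (I,Γ), (J,Δ) be form ideals of (A,Λ). Then for any index i ∈ Ω, any k ∈ Ω with k ≠ ±i, any a ∈ I and b ∈ λ^{(ε(i)−1)/2}Δ, one has [T_{i,−i}(a − λ^{ε(−i)}·ā), T_{−i,i}(b)] ≡ [T_{i,k}(a), T_{k,i}(b)] modulo EU(2n,(I,Γ)∘(J,Δ)). Here x ≡ y modulo a subgroup H means xy⁻¹ ∈ H. -/

import Mathlib

open Matrix
open scoped commutatorElement

/-- Bak's form ring data on a ring `A`: an involution `bar`, a central symmetry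
`λ` with `λ λ̄ = 1`, and a form parameter `Λ`. -/
structure FormRingData (A : Type*) [Ring A] where
  bar : A →+ A
  bar_mul : ∀ a b : A, bar (a * b) = bar b * bar a
  bar_bar : ∀ a : A, bar (bar a) = a
  lam : A
  lam_comm : ∀ a : A, lam * a = a * lam
  lam_bar : lam * bar lam = 1
  Lambda : AddSubgroup A
  lambdaMin_mem : ∀ c : A, c - lam * bar c ∈ Lambda
  lambdaMax_mem : ∀ x ∈ Lambda, x = -(lam * bar x)
  lambda_conj : ∀ (c : A), ∀ x ∈ Lambda, c * x * bar c ∈ Lambda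

namespace FormRingData

variable {A : Type*} [Ring A]

/-- Integral powers of the symmetry `λ`; negative powers use `λ̄ = λ⁻¹`. -/
def lpow (D : FormRingData A) (k : ℤ) : A :=
  if 0 ≤ k then D.lam ^ k.toNat else (D.bar D.lam) ^ (-k).toNat

end FormRingData

/-- The index set `Ω = {1,…,n,−n,…,−1}`, coded as `Fin n × Bool`
(second component `true` = positive index). -/
abbrev Idx (n : ℕ) := Fin n × Bool

namespace Idx

/-- The involution `i ↦ −i` on indices. -/
def neg {n : ℕ} (i : Idx n) : Idx n := (i.1, !i.2)

/-- The sign `ε(i) ∈ {±1}`. -/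
def eps {n : ℕ} (i : Idx n) : ℤ := if i.2 then 1 else -1

theorem neg_ne {n : ℕ} (i : Idx n) : neg i ≠ i := by
  simp [neg, Prod.ext_iff]

theorem neg_injective {n : ℕ} : Function.Injective (neg (n := n)) := by
  intro i j h
  simp only [neg, Prod.mk.injEq] at h
  refine Prod.ext h.1 ?_
  have h2 := h.2
  cases hi : i.2 <;> cases hj : j.2 <;> simp_all

theorem neg_neg {n : ℕ} (i : Idx n) : neg (neg i) = i := by
  simp [neg]

end Idx

/-- `GL(2n, A)`, realised as the units of the `Ω × Ω` matrix ring over `A`. -/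
abbrev GLn (A : Type*) [Ring A] (n : ℕ) := (Matrix (Idx n) (Idx n) A)ˣ

section aux

theorem one_add_mul_one_sub {R : Type*} [Ring R] {X : R} (h : X * X = 0) :
    (1 + X) * (1 - X) = 1 := by
  have hh : (1 + X) * (1 - X) = 1 - X * X := by noncomm_ring
  rw [hh, h, sub_zero]

theorem one_sub_mul_one_add {R : Type*} [Ring R] {X : R} (h : X * X = 0) :
    (1 - X) * (1 + X) = 1 := by
  have hh : (1 - X) * (1 + X) = 1 - X * X := by noncomm_ring
  rw [hh, h, sub_zero]

theorem stdBasisMatrix_neg' {A : Type*} [Ring A] {n : ℕ} (i j : Idx n) (c : A) :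
    Matrix.single i j (-c) = -Matrix.single i j c := by
  refine eq_neg_of_add_eq_zero_left ?_
  rw [← Matrix.single_add]
  simp

end aux

namespace FormRingData

variable {A : Type*} [Ring A] {n : ℕ}

/-- The off-diagonal part of a short root element. -/
def Xmat (D : FormRingData A) (i j : Idx n) (c : A) : Matrix (Idx n) (Idx n) A :=
  Matrix.single i j c -
    Matrix.single (Idx.neg j) (Idx.neg i) (D.lpow ((Idx.eps j - Idx.eps i) / 2) * D.bar c)

theorem Xmat_mul (D : FormRingData A) {i j : Idx n} (hij : i ≠ j) (c c' : A) :
    D.Xmat i j c * D.Xmat i j c' = 0 := by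
  unfold Xmat
  rw [sub_mul, mul_sub, mul_sub,
    Matrix.single_mul_single_of_ne _ _ _ _ (Ne.symm hij),
    Matrix.single_mul_single_of_ne _ _ _ _ (Ne.symm (Idx.neg_ne j)),
    Matrix.single_mul_single_of_ne _ _ _ _ (Idx.neg_ne i),
    Matrix.single_mul_single_of_ne _ _ _ _ (fun h => hij (Idx.neg_injective h))]
  simp

theorem Xmat_neg (D : FormRingData A) (i j : Idx n) (c : A) :
    D.Xmat i j (-c) = -D.Xmat i j c := by
  unfold Xmat
  rw [map_neg, mul_neg, stdBasisMatrix_neg', stdBasisMatrix_neg']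
  abel

/-- The elementary short root unipotent `T_{ij}(c)`, for `i ≠ ±j`
(with junk value `1` when `i = j`). -/
def TS (D : FormRingData A) (i j : Idx n) (c : A) : GLn A n :=
  if h : i = j then 1 else
    { val := 1 + D.Xmat i j c
      inv := 1 + D.Xmat i j (-c)
      val_inv := by
        rw [D.Xmat_neg, ← sub_eq_add_neg]
        exact one_add_mul_one_sub (D.Xmat_mul h c c)
      inv_val := by
        rw [D.Xmat_neg, ← sub_eq_add_neg]
        exact one_sub_mul_one_add (D.Xmat_mul h c c) }

/-- The elementary long root unipotent `T_{i,−i}(c)`. -/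
def TL (D : FormRingData A) (i : Idx n) (c : A) : GLn A n where
  val := 1 + Matrix.single i (Idx.neg i) c
  inv := 1 + Matrix.single i (Idx.neg i) (-c)
  val_inv := by
    rw [stdBasisMatrix_neg', ← sub_eq_add_neg]
    exact one_add_mul_one_sub (Matrix.single_mul_single_of_ne _ _ _ _ (Idx.neg_ne i) _)
  inv_val := by
    rw [stdBasisMatrix_neg', ← sub_eq_add_neg]
    exact one_sub_mul_one_add (Matrix.single_mul_single_of_ne _ _ _ _ (Idx.neg_ne i) _)

/-- The elementary unitary transvection `T_{ij}(c)` (long or short root type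
according to whether `j = −i`). -/
def T (D : FormRingData A) (i j : Idx n) (c : A) : GLn A n :=
  if j = Idx.neg i then D.TL i c else D.TS i j c

/-- The elementary commutator `Y_{ij}(a,b) = [T_{ij}(a), T_{ji}(b)]`. -/
def Y (D : FormRingData A) (i j : Idx n) (a b : A) : GLn A n :=
  ⁅D.T i j a, D.T j i b⁆

/-- The elementary conjugate `Z_{ij}(a,c) = T_{ji}(c) T_{ij}(a) T_{ji}(−c)`. -/
def Z (D : FormRingData A) (i j : Idx n) (a c : A) : GLn A n :=
  D.T j i c * D.T i j a * D.T j i (-c)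

/-- The set of elementary unitary transvections of level `(I,Γ)`. -/
def transvGen (D : FormRingData A) (n : ℕ) (I Γ : AddSubgroup A) : Set (GLn A n) :=
  {x | ∃ i j : Idx n, i ≠ j ∧ i ≠ Idx.neg j ∧ ∃ c ∈ I, x = D.TS i j c} ∪
    {x | ∃ i : Idx n, ∃ g ∈ Γ, x = D.TL i (D.lpow (-(Idx.eps i + 1) / 2) * g)}

/-- The unrelative elementary subgroup `FU(2n, I, Γ)`. -/
def FU (D : FormRingData A) (n : ℕ) (I Γ : AddSubgroup A) : Subgroup (GLn A n) :=
  Subgroup.closure (D.transvGen n I Γ)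

/-- The absolute elementary unitary group `EU(2n, A, Λ)`. -/
def EUmax (D : FormRingData A) (n : ℕ) : Subgroup (GLn A n) :=
  D.FU n ⊤ D.Lambda

/-- The relative elementary subgroup `EU(2n, I, Γ)`: the normal closure of
`FU(2n, I, Γ)` in `EU(2n, A, Λ)`. -/
def EU (D : FormRingData A) (n : ℕ) (I Γ : AddSubgroup A) : Subgroup (GLn A n) :=
  Subgroup.closure {x | ∃ g ∈ D.EUmax n, ∃ t ∈ D.transvGen n I Γ, x = g * t * g⁻¹}

/-- The additive subgroup generated by products `st`, `s ∈ S`, `t ∈ T`. -/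
def mulSub (S T : AddSubgroup A) : AddSubgroup A :=
  AddSubgroup.closure {x | ∃ a ∈ S, ∃ b ∈ T, x = a * b}

/-- The symmetrised product `ST + TS` of two (additive subgroups underlying)
two-sided ideals. -/
def symI (S T : AddSubgroup A) : AddSubgroup A :=
  mulSub S T ⊔ mulSub T S

/-- The minimal relative form parameter `Γ_min(K)` of level `K`. -/
def gammaMin (D : FormRingData A) (K : AddSubgroup A) : AddSubgroup A :=
  AddSubgroup.closure
    ({x | ∃ a ∈ K, x = a - D.lam * D.bar a} ∪
      {x | ∃ a ∈ K, ∃ c ∈ D.Lambda, x = a * c * D.bar a})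

/-- The relative form parameter `ˢΓ = ⟨ b γ b̄ ∣ b ∈ S, γ ∈ Γ ⟩`. -/
def conjPar (D : FormRingData A) (S Γ : AddSubgroup A) : AddSubgroup A :=
  AddSubgroup.closure {x | ∃ b ∈ S, ∃ g ∈ Γ, x = b * g * D.bar b}

/-- The relative form parameter of the symmetrised product
`(I,Γ)∘(J,Δ) = (IJ+JI, Γ_min(IJ+JI) + ᴶΓ + ᴵΔ)`. -/
def symG (D : FormRingData A) (I Γ J Δ : AddSubgroup A) : AddSubgroup A :=
  D.gammaMin (symI I J) ⊔ D.conjPar J Γ ⊔ D.conjPar I Δ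

/-- The elementary subgroup `EU(2n, (I,Γ)∘(J,Δ))` of the symmetrised product. -/
def EUsym (D : FormRingData A) (n : ℕ) (I Γ J Δ : AddSubgroup A) : Subgroup (GLn A n) :=
  D.EU n (symI I J) (D.symG I Γ J Δ)

/-- Position-dependent membership `a ∈ (I,Γ)` at position `(i,j)`:
`a ∈ I` for a short root position, `a ∈ λ^{−(ε(i)+1)/2}Γ` for a long one. -/
def pmem (D : FormRingData A) (I Γ : AddSubgroup A) {n : ℕ} (i j : Idx n) (a : A) : Prop :=
  if j = Idx.neg i then ∃ g ∈ Γ, a = D.lpow (-(Idx.eps i + 1) / 2) * g else a ∈ I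

end FormRingData

/-- A form ideal `(I,Γ)` of the form ring `(A,Λ)`. -/
structure FormIdeal {A : Type*} [Ring A] (D : FormRingData A) where
  I : AddSubgroup A
  Gamma : AddSubgroup A
  mul_mem_left : ∀ (c : A), ∀ x ∈ I, c * x ∈ I
  mul_mem_right : ∀ (c : A), ∀ x ∈ I, x * c ∈ I
  bar_mem : ∀ x ∈ I, D.bar x ∈ I
  gammaMin_le : D.gammaMin I ≤ Gamma
  gamma_le_I : Gamma ≤ I
  gamma_le_Lambda : Gamma ≤ D.Lambda
  gamma_conj : ∀ (c : A), ∀ x ∈ Gamma, c * x * D.bar c ∈ Gamma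

namespace FormRingData

variable {A : Type*} [Ring A] {n : ℕ}

theorem bar_one (D : FormRingData A) : D.bar 1 = 1 := by
  have h := D.bar_mul 1 (D.bar 1)
  rw [one_mul, D.bar_bar, one_mul] at h
  exact h.symm

theorem lam_bar' (D : FormRingData A) : D.bar D.lam * D.lam = 1 := by
  rw [← D.lam_comm, D.lam_bar]

def lamU (D : FormRingData A) : Aˣ := ⟨D.lam, D.bar D.lam, D.lam_bar, D.lam_bar'⟩

theorem lpow_eq (D : FormRingData A) (k : ℤ) : D.lpow k = ((D.lamU ^ k : Aˣ) : A) := by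
  unfold lpow
  split_ifs with h
  · obtain ⟨m, rfl⟩ := Int.eq_ofNat_of_zero_le h
    simp [lamU]
  · obtain ⟨m, hm⟩ := Int.eq_ofNat_of_zero_le (show 0 ≤ -k by omega)
    obtain rfl : k = -(m : ℤ) := by omega
    rw [_root_.zpow_neg, ← _root_.inv_zpow]
    simp [lamU]

theorem lpow_comm (D : FormRingData A) (k : ℤ) (x : A) : D.lpow k * x = x * D.lpow k := by
  have h1 : Commute D.lam x := D.lam_comm x
  have h2 : Commute (D.bar D.lam) x := by
    have h := congrArg D.bar (D.lam_comm (D.bar x))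
    rw [D.bar_mul, D.bar_mul, D.bar_bar] at h
    exact h.symm
  unfold lpow
  split_ifs
  · exact h1.pow_left _
  · exact h2.pow_left _

theorem lpow_add (D : FormRingData A) (k l : ℤ) : D.lpow k * D.lpow l = D.lpow (k + l) := by
  rw [lpow_eq, lpow_eq, lpow_eq, _root_.zpow_add, Units.val_mul]

theorem lpow_zero (D : FormRingData A) : D.lpow 0 = 1 := by simp [lpow]
theorem lpow_one (D : FormRingData A) : D.lpow 1 = D.lam := by simp [lpow]
theorem lpow_neg_one (D : FormRingData A) : D.lpow (-1) = D.bar D.lam := by simp [lpow]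

theorem sms {i j k l : Idx n} (a b : A) :
    Matrix.single i j a * Matrix.single k l b = if j = k then Matrix.single i l (a * b) else 0 := by
  split_ifs with h
  · subst h; simp
  · exact Matrix.single_mul_single_of_ne _ _ _ _ h _

theorem self_eq_bnot (b : Bool) : (b = !b) = False := by cases b <;> simp

theorem single_sub' (i j : Idx n) (a b : A) :
    Matrix.single i j (a - b) = Matrix.single i j a - Matrix.single i j b := by
  rw [sub_eq_add_neg, Matrix.single_add, stdBasisMatrix_neg', ← sub_eq_add_neg]

theorem TS_val (D : FormRingData A) {i j : Idx n} (h : i.1 ≠ j.1) (c : A) :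
    (D.TS i j c).val = 1 + D.Xmat i j c := by
  have : i ≠ j := fun h' => h (by rw [h'])
  simp [TS, this]

theorem TL_val (D : FormRingData A) (i : Idx n) (c : A) :
    (D.TL i c).val = 1 + Matrix.single i (Idx.neg i) c := rfl

theorem comm_iff {G : Type*} [Group G] {x y w : G} (h : x * y = w * y * x) : ⁅x, y⁆ = w := by
  rw [commutatorElement_def, h]; group

set_option linter.unusedSimpArgs false

/-- short relation -/
theorem relS (D : FormRingData A) {i j h : Idx n} (hij : i.1 ≠ j.1) (hjh : j.1 ≠ h.1)
    (hih : i.1 ≠ h.1) (a b : A) :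
    ⁅D.TS i j a, D.TS j h b⁆ = D.TS i h (a * b) := by
  apply comm_iff
  apply Units.ext
  simp only [Units.val_mul, D.TS_val hij, D.TS_val hjh, D.TS_val hih]
  obtain ⟨i, si⟩ := i
  obtain ⟨j, sj⟩ := j
  obtain ⟨h, sh⟩ := h
  simp only [ne_eq] at hij hjh hih
  have key : D.lpow ((Idx.eps (h, sh) - Idx.eps (j, sj)) / 2) * D.bar b *
      (D.lpow ((Idx.eps (j, sj) - Idx.eps (i, si)) / 2) * D.bar a) =
      D.lpow ((Idx.eps (h, sh) - Idx.eps (i, si)) / 2) * (D.bar b * D.bar a) := by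
    rw [mul_assoc, ← mul_assoc (D.bar b), ← D.lpow_comm, mul_assoc, ← mul_assoc, D.lpow_add]
    congr 2
    cases si <;> cases sj <;> cases sh <;> simp [Idx.eps]
  simp only [Xmat, mul_add, add_mul, mul_sub, sub_mul, sms, one_mul, mul_one]
  simp only [Idx.neg, Prod.mk.injEq, hij, hjh, hih, Ne.symm hij, Ne.symm hjh, Ne.symm hih,
    false_and, if_false, D.bar_mul, key, Bool.not_eq_self, self_eq_bnot, zero_mul, mul_zero, sms, true_and, and_false, and_self, if_true, Bool.not_not]
  abel

/-- commuting short relation -/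
theorem relC (D : FormRingData A) {i j h : Idx n} (hij : i.1 ≠ j.1) (hjh : j.1 ≠ h.1)
    (hih : i.1 ≠ h.1) (a b : A) :
    D.TS i j a * D.TS h j b = D.TS h j b * D.TS i j a := by
  apply Units.ext
  simp only [Units.val_mul, D.TS_val hij, D.TS_val hjh.symm]
  obtain ⟨i, si⟩ := i
  obtain ⟨j, sj⟩ := j
  obtain ⟨h, sh⟩ := h
  simp only [ne_eq] at hij hjh hih
  simp only [Xmat, mul_add, add_mul, mul_sub, sub_mul, sms, one_mul, mul_one]
  simp only [Idx.neg, Prod.mk.injEq, hij, hjh, hih, Ne.symm hij, Ne.symm hjh, Ne.symm hih,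
    false_and, if_false, Bool.not_eq_self, self_eq_bnot, zero_mul, mul_zero, sms, true_and, and_false]
  abel

theorem relC' (D : FormRingData A) {i j h : Idx n} (hij : i.1 ≠ j.1) (hjh : j.1 ≠ h.1)
    (hih : i.1 ≠ h.1) (a b : A) :
    D.TS j i a * D.TS j h b = D.TS j h b * D.TS j i a := by
  apply Units.ext
  simp only [Units.val_mul, D.TS_val hij.symm, D.TS_val hjh]
  obtain ⟨i, si⟩ := i
  obtain ⟨j, sj⟩ := j
  obtain ⟨h, sh⟩ := h
  simp only [ne_eq] at hij hjh hih
  simp only [Xmat, mul_add, add_mul, mul_sub, sub_mul, sms, one_mul, mul_one]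
  simp only [Idx.neg, Prod.mk.injEq, hij, hjh, hih, Ne.symm hij, Ne.symm hjh, Ne.symm hih,
    false_and, if_false, Bool.not_eq_self, self_eq_bnot, zero_mul, mul_zero, sms, true_and, and_false]
  abel

theorem relLL (D : FormRingData A) {i j : Idx n} (hij : i.1 ≠ j.1) (a b : A) :
    D.TL i a * D.TL j b = D.TL j b * D.TL i a := by
  apply Units.ext
  simp only [Units.val_mul, D.TL_val]
  obtain ⟨i, si⟩ := i
  obtain ⟨j, sj⟩ := j
  simp only [ne_eq] at hij
  simp only [mul_add, add_mul, sms, one_mul, mul_one]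
  simp only [Idx.neg, Prod.mk.injEq, hij, Ne.symm hij, false_and, if_false]
  abel

theorem relSSL (D : FormRingData A) {i k : Idx n} (hik : i.1 ≠ k.1) (a : A) :
    ⁅D.TS i k a, D.TS k (Idx.neg i) 1⁆ =
      D.TL i (a - D.lpow (Idx.eps (Idx.neg i)) * D.bar a) := by
  apply comm_iff
  apply Units.ext
  have hki : k.1 ≠ (Idx.neg i).1 := fun h => hik h.symm
  simp only [Units.val_mul, D.TS_val hik, D.TS_val hki, D.TL_val]
  obtain ⟨i, si⟩ := i
  obtain ⟨k, sk⟩ := k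
  simp only [ne_eq] at hik
  have key : D.lpow ((Idx.eps (i, !si) - Idx.eps (k, sk)) / 2) *
      (D.lpow ((Idx.eps (k, sk) - Idx.eps (i, si)) / 2) * D.bar a) =
      D.lpow (Idx.eps (i, !si)) * D.bar a := by
    rw [← mul_assoc, D.lpow_add]
    congr 2
    cases si <;> cases sk <;> simp [Idx.eps]
  simp only [Xmat, mul_add, add_mul, mul_sub, sub_mul, sms, one_mul, mul_one, bar_one]
  simp only [Idx.neg, Prod.mk.injEq, hik, Ne.symm hik, key,
    false_and, if_false, Bool.not_eq_self, self_eq_bnot, zero_mul, mul_zero, sms, true_and, and_false, and_self, if_true, Bool.not_not,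
    single_sub']
  abel

theorem relL (D : FormRingData A) {i j : Idx n} (hij : i.1 ≠ j.1) (c g : A) (hg : g ∈ D.Lambda) :
    ⁅D.TS i j c, D.TL j (D.lpow (-(Idx.eps j + 1) / 2) * g)⁆ =
      D.TL i (D.lpow (-(Idx.eps i + 1) / 2) * (c * g * D.bar c)) *
        D.TS i (Idx.neg j) (c * (D.lpow (-(Idx.eps j + 1) / 2) * g)) := by
  apply comm_iff
  apply Units.ext
  have hij' : i.1 ≠ (Idx.neg j).1 := hij
  simp only [Units.val_mul, D.TS_val hij, D.TS_val hij', D.TL_val]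
  have hg' := D.lambdaMax_mem g hg
  obtain ⟨i, si⟩ := i
  obtain ⟨j, sj⟩ := j
  simp only [ne_eq] at hij
  generalize hd : D.lpow (-(Idx.eps (j, sj) + 1) / 2) * g = d
  have hdb : D.bar d = -(D.lpow (Idx.eps (j, sj)) * d) := by
    subst hd
    have hb : D.lam * D.bar g = -g := by rw [eq_neg_iff_add_eq_zero, ← eq_neg_iff_add_eq_zero, ← neg_eq_iff_eq_neg]; exact hg'.symm
    have hb' : D.bar g = -(D.bar D.lam * g) := by
      rw [← mul_neg, ← hb, ← mul_assoc, D.lam_bar', one_mul]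
    cases sj
    · simp [Idx.eps, lpow_zero, lpow_neg_one, hb']
    · simp only [Idx.eps, if_true]
      rw [show (-(1 + 1) / 2 : ℤ) = -1 by norm_num, lpow_neg_one, lpow_one, D.bar_mul, D.bar_bar,
        ← mul_assoc, D.lam_bar, one_mul, ← D.lam_comm, hb]
  have key1 : D.lpow ((Idx.eps (j, !sj) - Idx.eps (i, si)) / 2) * (D.bar d * D.bar c) =
      -(d * (D.lpow ((Idx.eps (j, sj) - Idx.eps (i, si)) / 2) * D.bar c)) := by
    rw [hdb, ← mul_assoc d, ← D.lpow_comm, neg_mul, mul_neg, ← mul_assoc, ← mul_assoc, D.lpow_add]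
    congr 4
    cases si <;> cases sj <;> simp [Idx.eps]
  have key2 : D.lpow (-(Idx.eps (i, si) + 1) / 2) * (c * g * D.bar c) =
      c * d * (D.lpow ((Idx.eps (j, sj) - Idx.eps (i, si)) / 2) * D.bar c) := by
    rw [← hd, ← mul_assoc, ← mul_assoc, ← mul_assoc, ← mul_assoc,
      ← D.lpow_comm _ c, mul_assoc _ c g, mul_assoc _ c g, ← D.lpow_comm _ (_ * (c * g)),
      ← mul_assoc _ _ (c * g), D.lpow_add]
    congr 3
    cases si <;> cases sj <;> simp [Idx.eps]
  rw [key2]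
  simp only [Xmat, mul_add, add_mul, mul_sub, sub_mul, sms, one_mul, mul_one, D.bar_mul]
  simp only [Idx.neg, Prod.mk.injEq, hij, Ne.symm hij, key1, stdBasisMatrix_neg',
    false_and, if_false, Bool.not_eq_self, self_eq_bnot, zero_mul, mul_zero, sms, true_and, and_false, and_self, if_true, Bool.not_not, mul_assoc, mul_neg]
  abel_nf
  try simp

theorem TS_flip (D : FormRingData A) {i k : Idx n} (hik : i.1 ≠ k.1) (a : A) :
    D.TS i k a = D.TS (Idx.neg k) (Idx.neg i)
      (-(D.lpow ((Idx.eps k - Idx.eps i) / 2) * D.bar a)) := by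
  apply Units.ext
  have hik' : (Idx.neg k).1 ≠ (Idx.neg i).1 := fun h => hik h.symm
  rw [D.TS_val hik, D.TS_val hik']
  have e1 : D.bar (D.lpow ((Idx.eps k - Idx.eps i) / 2)) =
      D.lpow (-((Idx.eps k - Idx.eps i) / 2)) := by
    rcases i with ⟨i, si⟩
    rcases k with ⟨k, sk⟩
    cases si <;> cases sk <;> simp [Idx.eps, lpow_zero, lpow_one, lpow_neg_one, D.bar_bar, bar_one]
  have e2 : D.lpow ((Idx.eps (Idx.neg i) - Idx.eps (Idx.neg k)) / 2) =
      D.lpow ((Idx.eps k - Idx.eps i) / 2) := by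
    rcases i with ⟨i, si⟩
    rcases k with ⟨k, sk⟩
    cases si <;> cases sk <;> simp [Idx.eps, Idx.neg]
  simp only [Xmat, Idx.neg_neg, map_neg, D.bar_mul, D.bar_bar, e1, e2, stdBasisMatrix_neg', mul_neg]
  rw [← D.lpow_comm, ← mul_assoc, D.lpow_add, add_neg_cancel, lpow_zero, one_mul]
  abel

end FormRingData

theorem abstract_core {G : Type*} [Group G] {X Y Z W U V P q R : G}
    (hW : ⁅Y, Z⁆ = W) (hXY : Commute X Y) (hZX : ⁅Z, X⁆ = V * U)
    (hYV : Commute Y V) (hWV : Commute W V) (hWU : Commute W U)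
    (hU : ⁅P, q⁆ = U) (hYP : Commute Y P) (hUP : Commute U P) (hUq : Commute U q)
    (hqY : ⁅q, Y⁆ = R) (hRY : Commute R Y) (hRU : Commute R U) :
    ⁅W, X⁆ = ⁅Y, U⁆ := by
  have cg : ∀ {p : G}, Commute p Y → Commute p U → Commute p ⁅Y, U⁆ := by
    intro p h1 h2
    rw [commutatorElement_def]
    exact ((h1.mul_right h2).mul_right h1.inv_right).mul_right h2.inv_right
  have gP := cg hYP.symm hUP.symm
  have gR := cg hRY hRU
  have gq : Commute q ⁅Y, U⁆ := by
    have e1 : q * Y * q⁻¹ = R * Y := by rw [← hqY, commutatorElement_def]; group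
    have e2 : q * U * q⁻¹ = U := by rw [← hUq.eq]; group
    have e3 : q * ⁅Y, U⁆ * q⁻¹ = ⁅R * Y, U⁆ := by
      rw [conjugate_commutatorElement, e1, e2]
    have e4 : ⁅R * Y, U⁆ = R * ⁅Y, U⁆ * R⁻¹ * ⁅R, U⁆ := by
      simp only [commutatorElement_def]; group
    rw [e4, commutatorElement_eq_one_iff_commute.2 hRU, mul_one, gR.eq, mul_inv_cancel_right] at e3
    exact mul_inv_eq_iff_eq_mul.1 e3
  have gU : Commute U ⁅Y, U⁆ := by
    have : Commute ⁅P, q⁆ ⁅Y, U⁆ := by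
      rw [commutatorElement_def P q]
      exact ((gP.mul_left gq).mul_left gP.inv_left).mul_left gq.inv_left
    rwa [hU] at this
  have x1 : X * Y * X⁻¹ = Y := by rw [hXY.eq]; group
  have x2 : X * Z * X⁻¹ = U⁻¹ * V⁻¹ * Z := by
    rw [← _root_.mul_inv_rev, ← hZX, commutatorElement_def]; group
  have x3 : X * W * X⁻¹ = ⁅Y, U⁻¹⁆ * W := by
    have h1 : X * W * X⁻¹ = ⁅Y, U⁻¹ * V⁻¹ * Z⁆ := by
      rw [← hW, conjugate_commutatorElement, x1, x2]
    have h2 : ⁅Y, U⁻¹ * V⁻¹ * Z⁆ = Y * U⁻¹ * (V⁻¹ * Y⁻¹) * (⁅Y, Z⁆ * (V * U)) := by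
      simp only [commutatorElement_def]; group
    rw [h1, h2, hW, (hWV.mul_right hWU).eq, (hYV.inv_inv).symm.eq, commutatorElement_def]
    group
  have x4 : ⁅W, X⁆ = W * (X * W * X⁻¹)⁻¹ := by rw [commutatorElement_def]; group
  have x5 : ⁅Y, U⁻¹⁆⁻¹ = U⁻¹ * ⁅Y, U⁆ * U := by
    simp only [commutatorElement_def]; group
  rw [x4, x3, _root_.mul_inv_rev, x5, mul_inv_cancel_left, mul_assoc, ← gU.eq, inv_mul_cancel_left]

namespace FormRingData

variable {A : Type*} [Ring A] {n : ℕ}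

theorem idx_ne {i j : Idx n} (h : i.1 ≠ j.1) : i ≠ j ∧ i ≠ Idx.neg j :=
  ⟨fun e => h (by rw [e]), fun e => h (by rw [e]; rfl)⟩

theorem TS_mem_max (D : FormRingData A) {i j : Idx n} (h : i.1 ≠ j.1) (c : A) :
    D.TS i j c ∈ D.EUmax n :=
  Subgroup.subset_closure (Or.inl ⟨i, j, (idx_ne h).1, (idx_ne h).2, c, trivial, rfl⟩)

theorem TL_mem_max (D : FormRingData A) (i : Idx n) {g : A} (hg : g ∈ D.Lambda) :
    D.TL i (D.lpow (-(Idx.eps i + 1) / 2) * g) ∈ D.EUmax n :=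
  Subgroup.subset_closure (Or.inr ⟨i, g, hg, rfl⟩)

theorem gen_mem_EU (D : FormRingData A) {I Γ : AddSubgroup A} {t : GLn A n}
    (ht : t ∈ D.transvGen n I Γ) : t ∈ D.EU n I Γ :=
  Subgroup.subset_closure ⟨1, one_mem _, t, ht, by simp⟩

theorem TS_mem (D : FormRingData A) {I Γ : AddSubgroup A} {i j : Idx n} (h : i.1 ≠ j.1) {c : A}
    (hc : c ∈ I) : D.TS i j c ∈ D.EU n I Γ :=
  D.gen_mem_EU (Or.inl ⟨i, j, (idx_ne h).1, (idx_ne h).2, c, hc, rfl⟩)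

theorem TL_mem (D : FormRingData A) {I Γ : AddSubgroup A} (i : Idx n) {g : A} (hg : g ∈ Γ) :
    D.TL i (D.lpow (-(Idx.eps i + 1) / 2) * g) ∈ D.EU n I Γ :=
  D.gen_mem_EU (Or.inr ⟨i, g, hg, rfl⟩)

theorem EU_conj (D : FormRingData A) {I Γ : AddSubgroup A} {g x : GLn A n}
    (hg : g ∈ D.EUmax n) (hx : x ∈ D.EU n I Γ) : g * x * g⁻¹ ∈ D.EU n I Γ := by
  unfold EU at hx
  induction hx using Subgroup.closure_induction with
  | mem x hx =>
    obtain ⟨g', hg', t, ht, rfl⟩ := hx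
    exact Subgroup.subset_closure ⟨g * g', mul_mem hg hg', t, ht, by group⟩
  | one => simp
  | mul x y _ _ h1 h2 =>
    have := mul_mem h1 h2
    rwa [show g * x * g⁻¹ * (g * y * g⁻¹) = g * (x * y) * g⁻¹ by group] at this
  | inv x _ h =>
    have := inv_mem h
    rwa [show (g * x * g⁻¹)⁻¹ = g * x⁻¹ * g⁻¹ by group] at this

theorem EU_normal (D : FormRingData A) (I Γ : AddSubgroup A) :
    ((D.EU n I Γ).subgroupOf (D.EUmax n)).Normal :=
  ⟨fun x hx g => D.EU_conj (I := I) (Γ := Γ) g.2 hx⟩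

theorem symI_left {S T : AddSubgroup A} {a b : A} (ha : a ∈ S) (hb : b ∈ T) : a * b ∈ symI S T :=
  AddSubgroup.mem_sup_left (AddSubgroup.subset_closure ⟨a, ha, b, hb, rfl⟩)

theorem symI_right {S T : AddSubgroup A} {a b : A} (ha : a ∈ S) (hb : b ∈ T) : b * a ∈ symI S T :=
  AddSubgroup.mem_sup_right (AddSubgroup.subset_closure ⟨b, hb, a, ha, rfl⟩)

end FormRingData

open FormRingData in
theorem main_aux {A : Type*} [Ring A] (D : FormRingData A) (n : ℕ)
    (FI FJ : FormIdeal D) (i k h : Idx n) (hik : i.1 ≠ k.1) (hih : i.1 ≠ h.1) (hkh : k.1 ≠ h.1)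
    (a : A) (ha : a ∈ FI.I) (b d : A) (hd : d ∈ FJ.Gamma)
    (hb : b = D.lpow (-(Idx.eps (Idx.neg i) + 1) / 2) * d) (w g : A) (hg : g ∈ FI.Gamma)
    (hw : w = D.lpow (-(Idx.eps i + 1) / 2) * g)
    (hw' : w = a - D.lpow (Idx.eps (Idx.neg i)) * D.bar a) :
    ⁅D.TL i w, D.TL (Idx.neg i) b⁆ * (⁅D.TS i k a, D.TS k i b⁆)⁻¹ ∈
      D.EUsym n FI.I FI.Gamma FJ.I FJ.Gamma := by
  have hbJ : b ∈ FJ.I := hb ▸ FJ.mul_mem_left _ _ (FJ.gamma_le_I hd)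
  have hki := hik.symm
  have hdL := FJ.gamma_le_Lambda hd
  have hgL := FI.gamma_le_Lambda hg
  unfold EUsym
  generalize hE : D.EU n (symI FI.I FJ.I) (D.symG FI.I FI.Gamma FJ.I FJ.Gamma) = E
  have hS : ∀ {i j : Idx n} {c : A}, i.1 ≠ j.1 → c ∈ symI FI.I FJ.I → D.TS i j c ∈ E := by
    intro i j c h hc
    rw [← hE]; exact D.TS_mem h hc
  have hL1 : ∀ {i : Idx n} {x y : A}, x ∈ FI.I → y ∈ FJ.Gamma →
      D.TL i (D.lpow (-(Idx.eps i + 1) / 2) * (x * y * D.bar x)) ∈ E := by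
    intro i x y hx hy
    rw [← hE]
    exact D.TL_mem i (AddSubgroup.mem_sup_right (AddSubgroup.subset_closure ⟨x, hx, y, hy, rfl⟩))
  have hL2 : ∀ {i : Idx n} {x y : A}, x ∈ FJ.I → y ∈ FI.Gamma →
      D.TL i (D.lpow (-(Idx.eps i + 1) / 2) * (x * y * D.bar x)) ∈ E := by
    intro i x y hx hy
    rw [← hE]
    exact D.TL_mem i (AddSubgroup.mem_sup_left (AddSubgroup.mem_sup_right
      (AddSubgroup.subset_closure ⟨x, hx, y, hy, rfl⟩)))
  have hN : (E.subgroupOf (D.EUmax n)).Normal := by rw [← hE]; exact D.EU_normal _ _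
  let φ := QuotientGroup.mk' (E.subgroupOf (D.EUmax n))
  have cm : ∀ x y : D.EUmax n, ⁅(x : GLn A n), (y : GLn A n)⁆ ∈ E → Commute (φ x) (φ y) := by
    intro x y hxy
    rw [← commutatorElement_eq_one_iff_commute, ← map_commutatorElement]
    exact (QuotientGroup.eq_one_iff _).2 hxy
  have cm' : ∀ x y : D.EUmax n, (x : GLn A n) * y = y * x → Commute (φ x) (φ y) := by
    intro x y hxy
    apply cm
    rw [commutatorElement_eq_one_iff_mul_comm.2 hxy]
    exact one_mem _
  have ex : ∀ x y z : D.EUmax n, ⁅(x : GLn A n), (y : GLn A n)⁆ = z → ⁅φ x, φ y⁆ = φ z := by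
    intro x y z hxy
    rw [← map_commutatorElement]
    exact congrArg φ (Subtype.ext hxy)
  let X : D.EUmax n := ⟨D.TL (Idx.neg i) b, hb ▸ D.TL_mem_max _ hdL⟩
  let W : D.EUmax n := ⟨D.TL i w, hw ▸ D.TL_mem_max _ hgL⟩
  let V : D.EUmax n := ⟨D.TL k (D.lpow (-(Idx.eps k + 1) / 2) * d), D.TL_mem_max _ hdL⟩
  let Y : D.EUmax n := ⟨D.TS i k a, D.TS_mem_max hik a⟩
  let Z : D.EUmax n := ⟨D.TS k (Idx.neg i) 1, D.TS_mem_max (j := Idx.neg i) hki 1⟩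
  let U : D.EUmax n := ⟨D.TS k i b, D.TS_mem_max hki b⟩
  let P : D.EUmax n := ⟨D.TS k h b, D.TS_mem_max hkh b⟩
  let q : D.EUmax n := ⟨D.TS h i 1, D.TS_mem_max hih.symm 1⟩
  let R : D.EUmax n := ⟨D.TS h k a, D.TS_mem_max hkh.symm a⟩
  have key : ⁅φ W, φ X⁆ = ⁅φ Y, φ U⁆ := by
    apply abstract_core (Z := φ Z) (V := φ V) (P := φ P) (q := φ q) (R := φ R)
    · exact ex Y Z W ((D.relSSL hik a).trans (congrArg (D.TL i) hw'.symm))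
    · refine (cm Y X ?_).symm
      change ⁅D.TS i k a, D.TL (Idx.neg i) b⁆ ∈ E
      have ha' : -(D.lpow ((Idx.eps k - Idx.eps i) / 2) * D.bar a) ∈ FI.I :=
        neg_mem (FI.mul_mem_left _ _ (FI.bar_mem _ ha))
      have hki' : (Idx.neg k).1 ≠ (Idx.neg i).1 := hki
      rw [D.TS_flip hik, hb, D.relL hki' _ d hdL, ← hb]
      exact mul_mem (hL1 ha' hd) (hS hki' (symI_left ha' hbJ))
    · rw [← map_mul]
      refine ex Z X (V * U) ?_
      change ⁅D.TS k (Idx.neg i) 1, D.TL (Idx.neg i) b⁆ = D.TL k _ * D.TS k i b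
      have hki' : k.1 ≠ (Idx.neg i).1 := hki
      rw [hb, D.relL hki' _ d hdL, one_mul, one_mul, bar_one, mul_one, Idx.neg_neg]
    · refine cm Y V ?_
      change ⁅D.TS i k a, D.TL k _⁆ ∈ E
      rw [D.relL hik _ d hdL]
      exact mul_mem (hL1 ha hd)
        (hS hik (symI_left ha (FJ.mul_mem_left _ _ (FJ.gamma_le_I hd))))
    · exact cm' W V (D.relLL hik _ _)
    · refine (cm U W ?_).symm
      change ⁅D.TS k i b, D.TL i w⁆ ∈ E
      rw [hw, D.relL hki _ g hgL]
      exact mul_mem (hL2 hbJ hg)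
        (hS hki (symI_right (FI.mul_mem_left _ _ (FI.gamma_le_I hg)) hbJ))
    · refine ex P q U ?_
      have := D.relS hkh hih.symm hki b 1
      rwa [mul_one] at this
    · refine cm Y P ?_
      change ⁅D.TS i k a, D.TS k h b⁆ ∈ E
      rw [D.relS hik hkh hih]
      exact hS hih (symI_left ha hbJ)
    · exact cm' U P (D.relC' hik hkh hih b b)
    · exact cm' U q (D.relC hki hih hkh b 1)
    · refine ex q Y R ?_
      have := D.relS hih.symm hik hkh.symm 1 a
      rwa [one_mul] at this
    · exact cm' R Y (D.relC hkh.symm hki hih.symm a a)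
    · refine cm R U ?_
      change ⁅D.TS h k a, D.TS k i b⁆ ∈ E
      rw [D.relS hkh.symm hki hih.symm]
      exact hS hih.symm (symI_left ha hbJ)
  rw [← map_commutatorElement, ← map_commutatorElement] at key
  have := (QuotientGroup.eq_iff_div_mem).1 key
  rw [div_eq_mul_inv] at this
  exact this

/-- Lemma (matching elementary commutators of different root lengths):
`[T_{i,−i}(a − λ^{ε(−i)} ā), T_{−i,i}(b)] ≡ [T_{ik}(a), T_{ki}(b)]` modulo
`EU(2n,(I,Γ)∘(J,Δ))`. -/
theorem statement13 {A : Type*} [Ring A] (D : FormRingData A) (n : ℕ) (hn : 3 ≤ n)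
    (FI FJ : FormIdeal D) (i k : Idx n) (hk : k ≠ i) (hk' : k ≠ Idx.neg i)
    (a : A) (ha : a ∈ FI.I)
    (b : A) (hb : ∃ d ∈ FJ.Gamma, b = D.lpow ((Idx.eps i - 1) / 2) * d) :
    ⁅D.TL i (a - D.lpow (Idx.eps (Idx.neg i)) * D.bar a), D.TL (Idx.neg i) b⁆ *
        (⁅D.TS i k a, D.TS k i b⁆)⁻¹ ∈
      D.EUsym n FI.I FI.Gamma FJ.I FJ.Gamma := by
  have hik : i.1 ≠ k.1 := by
    intro e
    rcases i with ⟨i, si⟩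
    rcases k with ⟨k, sk⟩
    simp only at e
    subst e
    cases si <;> cases sk <;> simp [Idx.neg] at hk hk'
  obtain ⟨h, hh⟩ : ∃ h : Fin n, h ∉ ({i.1, k.1} : Finset (Fin n)) := by
    by_contra hc
    push Not at hc
    have h1 : (Finset.univ : Finset (Fin n)) ⊆ {i.1, k.1} := fun x _ => hc x
    have h2 := Finset.card_le_card h1
    have h3 := Finset.card_le_two (a := i.1) (b := k.1)
    rw [Finset.card_univ, Fintype.card_fin] at h2
    omega
  simp only [Finset.mem_insert, Finset.mem_singleton, not_or] at hh
  obtain ⟨d, hd, hb⟩ := hb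
  have hb' : b = D.lpow (-(Idx.eps (Idx.neg i) + 1) / 2) * d := by
    rw [hb]
    rcases i with ⟨i, si⟩
    cases si <;> simp [Idx.eps, Idx.neg]
  obtain ⟨g, hg, hw⟩ : ∃ g ∈ FI.Gamma, a - D.lpow (Idx.eps (Idx.neg i)) * D.bar a =
      D.lpow (-(Idx.eps i + 1) / 2) * g := by
    have hmin : ∀ x ∈ FI.I, x - D.lam * D.bar x ∈ FI.Gamma := fun x hx =>
      FI.gammaMin_le (AddSubgroup.subset_closure (Or.inl ⟨x, hx, rfl⟩))
    rcases i with ⟨i, si⟩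
    cases si
    · refine ⟨_, hmin a ha, ?_⟩
      simp [Idx.eps, Idx.neg, FormRingData.lpow_zero, FormRingData.lpow_one]
    · refine ⟨_, neg_mem (hmin _ (FI.bar_mem _ ha)), ?_⟩
      simp [Idx.eps, Idx.neg, FormRingData.lpow_neg_one, D.bar_bar, mul_sub, ← mul_assoc,
        D.lam_bar']
  exact main_aux D n FI FJ i k (h, true) hik (fun e => hh.1 e.symm) (fun e => hh.2 e.symm)
    a ha b d hd hb' _ g hg hw rfl
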